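/- Let F be a Minkowski norm on ℝⁿ, let Ω ⊆ ℝⁿ be an open set with smooth boundary such that Ω^c is bounded, let 1 < p < n, and let u_p be the C¹ weak solution of div(F(∇u)^{p−1} F_ξ(∇u)) = F(∇u)^p in Ω with u_p = 0 on ∂Ω and u_p → +∞ at infinity. If the Wulff shape W_r(x₀) is contained in Ω^c, then u_p(x) ≤ (n−p)·log(F^o(x−x₀)/r) for all x ∈ Ω. -/

import Mathlib

open MeasureTheory Filter Topology Metric Set
open scoped RealInnerProductSpace NNReal

noncomputable section

abbrev En (n : ℕ) := EuclideanSpace ℝ (Fin n)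

/-- A Minkowski norm on ℝⁿ: a norm (convex, even, 1-homogeneous, positive away from 0)
which is smooth away from the origin and whose Hessian of `F²/2` is positive definite
on `ℝⁿ \ {0}`. -/
structure MinkowskiNorm (n : ℕ) where
  F : En n → ℝ
  convexOn : ConvexOn ℝ Set.univ F
  even : ∀ ξ, F (-ξ) = F ξ
  homog : ∀ c : ℝ, 0 ≤ c → ∀ ξ, F (c • ξ) = c * F ξ
  pos : ∀ ξ : En n, ξ ≠ 0 → 0 < F ξ
  smooth : ContDiffOn ℝ (⊤ : ℕ∞) F {(0 : En n)}ᶜ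
  elliptic : ∀ ξ : En n, ξ ≠ 0 → ∀ v : En n, v ≠ 0 →
    0 < fderiv ℝ (fun x => fderiv ℝ (fun y => F y ^ 2 / 2) x) ξ v v

/-- Locally Lipschitz on a set (i.e. `C^{0,1}_loc`). -/
def LocLipOn {n : ℕ} (f : En n → ℝ) (s : Set (En n)) : Prop :=
  ∀ x ∈ s, ∃ (K : ℝ≥0) (t : Set (En n)), t ∈ nhdsWithin x s ∧ LipschitzOnWith K f t

/-- Weak solution of `div(F_ξ(∇u)) = F(∇u)` in `Ω` in the sense of Huisken–Ilmanen's
minimization principle. -/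
def IsWeakSolIAMCF {n : ℕ} (N : MinkowskiNorm n) (Ω : Set (En n)) (u : En n → ℝ) : Prop :=
  LocLipOn u Ω ∧
  ∀ K : Set (En n), IsCompact (closure K) → closure K ⊆ Ω →
    ∀ φ : En n → ℝ, LocLipOn φ Ω → (∀ x ∈ Ω \ K, φ x = u x) →
      (∫ x in K, (N.F (gradient u x) + u x * N.F (gradient u x))) ≤
        ∫ x in K, (N.F (gradient φ x) + φ x * N.F (gradient u x))

/-- Weak subsolution: the minimization inequality holds for competitors `φ ≤ u`. -/
def IsWeakSubSolIAMCF {n : ℕ} (N : MinkowskiNorm n) (Ω : Set (En n)) (u : En n → ℝ) : Prop :=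
  LocLipOn u Ω ∧
  ∀ K : Set (En n), IsCompact (closure K) → closure K ⊆ Ω →
    ∀ φ : En n → ℝ, LocLipOn φ Ω → (∀ x ∈ Ω \ K, φ x = u x) → (∀ x ∈ Ω, φ x ≤ u x) →
      (∫ x in K, (N.F (gradient u x) + u x * N.F (gradient u x))) ≤
        ∫ x in K, (N.F (gradient φ x) + φ x * N.F (gradient u x))

/-- Weak supersolution: the minimization inequality holds for competitors `φ ≥ u`. -/
def IsWeakSuperSolIAMCF {n : ℕ} (N : MinkowskiNorm n) (Ω : Set (En n)) (u : En n → ℝ) : Prop :=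
  LocLipOn u Ω ∧
  ∀ K : Set (En n), IsCompact (closure K) → closure K ⊆ Ω →
    ∀ φ : En n → ℝ, LocLipOn φ Ω → (∀ x ∈ Ω \ K, φ x = u x) → (∀ x ∈ Ω, u x ≤ φ x) →
      (∫ x in K, (N.F (gradient u x) + u x * N.F (gradient u x))) ≤
        ∫ x in K, (N.F (gradient φ x) + φ x * N.F (gradient u x))

/-- A smooth compactly supported test function on `Ω`. -/
def IsTestFun {n : ℕ} (Ω : Set (En n)) (ψ : En n → ℝ) : Prop :=
  ContDiff ℝ (⊤ : ℕ∞) ψ ∧ HasCompactSupport ψ ∧ tsupport ψ ⊆ Ω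

/-- Weak solution of the Finsler `p`-Laplace equation `div(F(∇v)^{p-1} F_ξ(∇v)) = 0` in `Ω`. -/
def IsWeakPHarmonic {n : ℕ} (N : MinkowskiNorm n) (Ω : Set (En n)) (p : ℝ)
    (v : En n → ℝ) : Prop :=
  ∀ ψ : En n → ℝ, IsTestFun Ω ψ →
    (∫ x in Ω, N.F (gradient v x) ^ (p - 1) *
      ⟪gradient N.F (gradient v x), gradient ψ x⟫) = 0

/-- Weak solution of `div(F(∇u)^{p-1} F_ξ(∇u)) = F(∇u)^p` in `Ω`. -/
def IsWeakPSol {n : ℕ} (N : MinkowskiNorm n) (Ω : Set (En n)) (p : ℝ)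
    (u : En n → ℝ) : Prop :=
  ∀ ψ : En n → ℝ, IsTestFun Ω ψ →
    (∫ x in Ω, N.F (gradient u x) ^ (p - 1) *
      ⟪gradient N.F (gradient u x), gradient ψ x⟫) =
      - ∫ x in Ω, N.F (gradient u x) ^ p * ψ x

/-- The polar (dual) norm `F^o(x) = sup_{ξ ≠ 0} ⟨ξ, x⟩ / F(ξ)`. -/
def polarF {n : ℕ} (N : MinkowskiNorm n) (x : En n) : ℝ :=
  sSup {c : ℝ | ∃ ξ : En n, ξ ≠ 0 ∧ c = ⟪ξ, x⟫ / N.F ξ}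

/-- The Wulff shape of radius `r` centered at `x₀`: `{x : F^o(x - x₀) < r}`. -/
def Wulff {n : ℕ} (N : MinkowskiNorm n) (r : ℝ) (x₀ : En n) : Set (En n) :=
  {x | polarF N (x - x₀) < r}

/-- `Ω` is an open set with smooth boundary: it is a smooth sublevel set of a smooth
function with nonvanishing gradient on the boundary. -/
def HasSmoothBoundary {n : ℕ} (Ω : Set (En n)) : Prop :=
  ∃ f : En n → ℝ, ContDiff ℝ (⊤ : ℕ∞) f ∧ Ω = {x | f x < 0} ∧
    ∀ x ∈ frontier Ω, fderiv ℝ f x ≠ 0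

/-- `C¹` on `s` with locally Hölder continuous gradient (i.e. `C^{1,α}_loc`). -/
def C1LocHolderOn {n : ℕ} (v : En n → ℝ) (s : Set (En n)) : Prop :=
  ContDiffOn ℝ 1 v s ∧
  ∀ x ∈ s, ∃ (α C : ℝ≥0), 0 < α ∧ (α : ℝ) ≤ 1 ∧
    ∃ t ∈ nhdsWithin x s, HolderOnWith C α (fun y => gradient v y) t

/-- Divergence of a vector field on `ℝⁿ`. -/
def divg {n : ℕ} (V : En n → En n) (x : En n) : ℝ :=
  ∑ i : Fin n, fderiv ℝ V x (EuclideanSpace.single i 1) i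

/-- The second derivative in a direction along which the function is locally constant vanishes. -/
lemma fderiv_fderiv_apply_eq_zero {E : Type*} [NormedAddCommGroup E] [NormedSpace ℝ E]
    {G : E → ℝ} {m v : E} {c : ℝ} (hG : ContDiffAt ℝ 2 G m)
    (hc : ∀ᶠ t : ℝ in 𝓝 0, G (m + t • v) = c) :
    fderiv ℝ (fun x => fderiv ℝ G x) m v v = 0 := by
  have hG' : ContDiffAt ℝ 1 (fun x => fderiv ℝ G x) m := hG.fderiv_right (by norm_num)
  have hline : ∀ s : ℝ, HasDerivAt (fun t : ℝ => m + t • v) v s := fun s => by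
    simpa using ((hasDerivAt_id s).smul_const v).const_add m
  have hcont : Tendsto (fun t : ℝ => m + t • v) (𝓝 0) (𝓝 m) := by
    simpa using (hline 0).continuousAt.tendsto
  have hdiff : ∀ᶠ x in 𝓝 m, DifferentiableAt ℝ G x := by
    filter_upwards [hG.eventually (by simp)] with x hx using hx.differentiableAt (by norm_num)
  have hfirst : ∀ᶠ t : ℝ in 𝓝 0, fderiv ℝ G (m + t • v) v = 0 := by
    filter_upwards [hc.eventually_nhds, hcont.eventually hdiff] with t ht hd
    exact (hd.hasFDerivAt.comp_hasDerivAt t (hline t)).unique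
      ((hasDerivAt_const t c).congr_of_eventuallyEq ht)
  have hd2 : HasFDerivAt (fun x => fderiv ℝ G x)
      (fderiv ℝ (fun x => fderiv ℝ G x) m) (m + (0 : ℝ) • v) := by
    simpa using (hG'.differentiableAt (by norm_num)).hasFDerivAt
  have h3 : HasDerivAt (fun t : ℝ => fderiv ℝ G (m + t • v))
      (fderiv ℝ (fun x => fderiv ℝ G x) m v) 0 := hd2.comp_hasDerivAt (0 : ℝ) (hline 0)
  have h4 : HasDerivAt (fun t : ℝ => fderiv ℝ G (m + t • v) v)
      (fderiv ℝ (fun x => fderiv ℝ G x) m v v) 0 :=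
    (ContinuousLinearMap.apply ℝ ℝ v).hasFDerivAt.comp_hasDerivAt (0 : ℝ) h3
  exact h4.unique ((hasDerivAt_const (0 : ℝ) (0 : ℝ)).congr_of_eventuallyEq hfirst)

namespace MinkowskiNorm

variable {n : ℕ} (N : MinkowskiNorm n)

lemma map_zero : N.F 0 = 0 := by
  simpa using N.homog 0 le_rfl 0

lemma nonneg (ξ : En n) : 0 ≤ N.F ξ := by
  rcases eq_or_ne ξ 0 with rfl | h
  · exact N.map_zero.ge
  · exact (N.pos ξ h).le

lemma add_le (ξ η : En n) : N.F (ξ + η) ≤ N.F ξ + N.F η := by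
  have h := N.convexOn.2 (mem_univ ξ) (mem_univ η) (by norm_num : (0 : ℝ) ≤ 1 / 2)
    (by norm_num : (0 : ℝ) ≤ 1 / 2) (by norm_num)
  rw [← smul_add, N.homog _ (by norm_num), smul_eq_mul, smul_eq_mul] at h
  linarith

lemma continuous : Continuous N.F := by
  rw [← continuousOn_univ]
  exact N.convexOn.continuousOn isOpen_univ

lemma contDiffAt {ξ : En n} (hξ : ξ ≠ 0) : ContDiffAt ℝ (⊤ : ℕ∞) N.F ξ :=
  N.smooth.contDiffAt (isOpen_compl_singleton.mem_nhds hξ)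

lemma differentiableAt {ξ : En n} (hξ : ξ ≠ 0) : DifferentiableAt ℝ N.F ξ :=
  (N.contDiffAt hξ).differentiableAt (by simp)

/-- A Minkowski norm is bounded by a multiple of the Euclidean norm. -/
lemma exists_le_mul_norm : ∃ M : ℝ, 0 < M ∧ ∀ ξ, N.F ξ ≤ M * ‖ξ‖ := by
  obtain ⟨C, hC⟩ := (isCompact_sphere (0 : En n) 1).bddAbove_image N.continuous.continuousOn
  refine ⟨max C 1, by positivity, fun ξ => ?_⟩
  rcases eq_or_ne ξ 0 with rfl | h
  · simp [N.map_zero]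
  · have h1 : N.F (‖ξ‖⁻¹ • ξ) ≤ C := hC ⟨_, by simp [norm_smul, h], rfl⟩
    have h0 : 0 < ‖ξ‖ := norm_pos_iff.2 h
    rw [N.homog _ (by positivity), inv_mul_le_iff₀ h0] at h1
    nlinarith [le_max_left C 1]

/-- A Minkowski norm dominates a multiple of the Euclidean norm. -/
lemma exists_norm_le_mul : ∃ m : ℝ, 0 < m ∧ ∀ ξ, ‖ξ‖ ≤ m * N.F ξ := by
  rcases (sphere (0 : En n) 1).eq_empty_or_nonempty with he | hne
  · refine ⟨1, one_pos, fun ξ => ?_⟩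
    rcases eq_or_ne ξ 0 with rfl | h
    · simp [N.map_zero]
    · have : ‖ξ‖⁻¹ • ξ ∈ sphere (0 : En n) 1 := by simp [norm_smul, h]
      simp [he] at this
  · obtain ⟨ζ, hζ, hmin⟩ := (isCompact_sphere (0 : En n) 1).exists_isMinOn hne
      N.continuous.continuousOn
    have hζ0 : ζ ≠ 0 := by rintro rfl; simp at hζ
    have hp := N.pos ζ hζ0
    refine ⟨(N.F ζ)⁻¹, by positivity, fun ξ => ?_⟩
    rcases eq_or_ne ξ 0 with rfl | h
    · simp [N.map_zero]
    · have h1 : N.F ζ ≤ N.F (‖ξ‖⁻¹ • ξ) := hmin (by simp [norm_smul, h])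
      have h0 : 0 < ‖ξ‖ := norm_pos_iff.2 h
      rw [N.homog _ (by positivity), ← div_eq_inv_mul, le_div_iff₀ h0] at h1
      rw [← div_eq_inv_mul, le_div_iff₀ hp]
      linarith

lemma hasDerivAt_line {ξ : En n} (hξ : ξ ≠ 0) (η : En n) :
    HasDerivAt (fun t : ℝ => N.F (ξ + t • η)) ⟪gradient N.F ξ, η⟫ 0 := by
  have h1 : HasFDerivAt N.F (fderiv ℝ N.F ξ) (ξ + (0 : ℝ) • η) := by
    simpa using (N.differentiableAt hξ).hasFDerivAt
  have h2 : HasDerivAt (fun t : ℝ => ξ + t • η) η 0 := by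
    simpa using ((hasDerivAt_id (0 : ℝ)).smul_const η).const_add ξ
  rw [inner_gradient_left]
  exact h1.comp_hasDerivAt (0 : ℝ) h2

lemma inner_gradient_le {ξ : En n} (hξ : ξ ≠ 0) (η : En n) :
    ⟪gradient N.F ξ, η⟫ ≤ N.F η := by
  have h := (N.hasDerivAt_line hξ η).hasDerivWithinAt (s := Ioi 0)
  rw [hasDerivWithinAt_iff_tendsto_slope' (by simp)] at h
  refine le_of_tendsto h ?_
  filter_upwards [self_mem_nhdsWithin] with t (ht : 0 < t)
  rw [slope_def_field, div_le_iff₀ (by simpa using ht)]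
  have := N.add_le ξ (t • η)
  rw [N.homog t ht.le] at this
  simp only [zero_smul, add_zero, sub_zero]
  linarith

/-- Euler's identity. -/
lemma inner_gradient_self {ξ : En n} (hξ : ξ ≠ 0) : ⟪gradient N.F ξ, ξ⟫ = N.F ξ := by
  refine le_antisymm (N.inner_gradient_le hξ ξ) ?_
  have h := (N.hasDerivAt_line hξ ξ).hasDerivWithinAt (s := Ioi 0)
  rw [hasDerivWithinAt_iff_tendsto_slope' (by simp)] at h
  refine ge_of_tendsto h ?_
  filter_upwards [self_mem_nhdsWithin] with t (ht : 0 < t)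
  rw [slope_def_field, le_div_iff₀ (by simpa using ht)]
  have : ξ + t • ξ = (1 + t) • ξ := by rw [add_smul, one_smul]
  simp only [zero_smul, add_zero, sub_zero]
  rw [this, N.homog _ (by linarith)]
  linarith

lemma norm_gradient_le {M : ℝ} (hM : ∀ ξ, N.F ξ ≤ M * ‖ξ‖) {ξ : En n} (hξ : ξ ≠ 0) :
    ‖gradient N.F ξ‖ ≤ M := by
  have h := (N.inner_gradient_le hξ (gradient N.F ξ)).trans (hM _)
  rw [real_inner_self_eq_norm_sq] at h
  rcases (norm_nonneg (gradient N.F ξ)).eq_or_lt with h0 | h0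
  · have := (N.nonneg ξ).trans (hM ξ)
    rw [← h0]
    exact nonneg_of_mul_nonneg_left this (norm_pos_iff.2 hξ)
  · nlinarith

lemma gradient_smul {c : ℝ} (hc : 0 < c) {ξ : En n} (hξ : ξ ≠ 0) :
    gradient N.F (c • ξ) = gradient N.F ξ := by
  have hcξ : c • ξ ≠ 0 := smul_ne_zero hc.ne' hξ
  refine ext_inner_right ℝ fun η => ?_
  have h1 := N.hasDerivAt_line hcξ (c • η)
  have h2 := (N.hasDerivAt_line hξ η).const_mul c
  have h3 : (fun t : ℝ => N.F (c • ξ + t • c • η)) = fun t => c * N.F (ξ + t • η) := by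
    funext t
    rw [smul_comm t c, ← smul_add, N.homog c hc.le]
  rw [h3] at h1
  have := h1.unique h2
  rw [inner_smul_right] at this
  exact mul_left_cancel₀ hc.ne' this

/-- Strict convexity: two points of equal norm supported by the same linear functional agree. -/
lemma eq_of_inner_eq {ν ξ η : En n} (hν : ∀ ζ, ⟪ν, ζ⟫ ≤ N.F ζ) (hξ : ⟪ν, ξ⟫ = N.F ξ)
    (hη : ⟪ν, η⟫ = N.F η) (h : N.F ξ = N.F η) : ξ = η := by
  by_contra hne
  have hξ0 : ξ ≠ 0 := by
    rintro rfl
    refine hne ?_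
    by_contra h0
    exact (N.pos η (Ne.symm h0)).ne' (by rw [← h, N.map_zero])
  have hpos := N.pos ξ hξ0
  set v := η - ξ with hv
  have hv0 : v ≠ 0 := sub_ne_zero.2 (Ne.symm hne)
  have hconst : ∀ t ∈ Icc (0 : ℝ) 1, N.F (ξ + t • v) = N.F ξ := by
    intro t ht
    have hz : ξ + t • v = (1 - t) • ξ + t • η := by rw [hv]; module
    refine le_antisymm ?_ ?_
    · have h1 := N.convexOn.2 (mem_univ ξ) (mem_univ η) (sub_nonneg.2 ht.2) ht.1 (by ring)
      rw [hz]
      refine h1.trans (le_of_eq ?_)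
      rw [← h, smul_eq_mul, smul_eq_mul]; ring
    · refine le_trans (le_of_eq ?_) (hν _)
      rw [inner_add_right, inner_smul_right, hv, inner_sub_right, hξ, hη, h]; ring
  set m := ξ + (1 / 2 : ℝ) • v with hm
  have hFm : N.F m = N.F ξ := hconst _ (by norm_num)
  have hm0 : m ≠ 0 := by
    intro h0
    rw [h0, N.map_zero] at hFm
    exact hpos.ne hFm
  have hG : ContDiffAt ℝ 2 (fun y => N.F y ^ 2 / 2) m :=
    (((N.contDiffAt hm0).of_le (WithTop.coe_le_coe.2 le_top)).pow 2).div_const 2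
  refine (N.elliptic m hm0 v hv0).ne' (fderiv_fderiv_apply_eq_zero (c := N.F ξ ^ 2 / 2) hG ?_)
  filter_upwards [Ioo_mem_nhds (by norm_num : (-(1 / 2) : ℝ) < 0)
    (by norm_num : (0 : ℝ) < 1 / 2)] with t ht
  rw [hm, add_assoc, ← add_smul, hconst _ ⟨by linarith [ht.1], by linarith [ht.2]⟩]

end MinkowskiNorm

namespace MinkowskiNorm

variable {n : ℕ} (N : MinkowskiNorm n)

/-- The flux `F(ξ)^{p-1} F_ξ(ξ)` of the Finsler `p`-Laplacian. -/
def flux (p : ℝ) (ξ : En n) : En n := N.F ξ ^ (p - 1) • gradient N.F ξ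

variable {p : ℝ}

lemma flux_zero (hp : 1 < p) : N.flux p 0 = 0 := by
  rw [flux, N.map_zero, Real.zero_rpow (by linarith), zero_smul]

lemma flux_smul (hp : 1 < p) {c : ℝ} (hc : 0 < c) (ξ : En n) :
    N.flux p (c • ξ) = c ^ (p - 1) • N.flux p ξ := by
  rcases eq_or_ne ξ 0 with rfl | hξ
  · simp [N.flux_zero hp]
  · rw [flux, flux, N.gradient_smul hc hξ, N.homog c hc.le,
      Real.mul_rpow hc.le (N.nonneg ξ), smul_smul]

lemma inner_flux_self (hp : 1 < p) (ξ : En n) : ⟪N.flux p ξ, ξ⟫ = N.F ξ ^ p := by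
  rcases eq_or_ne ξ 0 with rfl | hξ
  · rw [inner_zero_right, N.map_zero, Real.zero_rpow (by linarith)]
  · rw [flux, real_inner_smul_left, N.inner_gradient_self hξ, ← Real.rpow_add_one (N.pos ξ hξ).ne']
    congr 1; ring

lemma inner_flux_le (hp : 1 < p) (ξ η : En n) :
    ⟪N.flux p ξ, η⟫ ≤ N.F ξ ^ (p - 1) * N.F η := by
  rcases eq_or_ne ξ 0 with rfl | hξ
  · rw [N.flux_zero hp, inner_zero_left, N.map_zero, Real.zero_rpow (by linarith), zero_mul]
  · rw [flux, real_inner_smul_left]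
    exact mul_le_mul_of_nonneg_left (N.inner_gradient_le hξ η) (Real.rpow_nonneg (N.nonneg ξ) _)

lemma continuous_flux (hp : 1 < p) : Continuous (N.flux p) := by
  rw [continuous_iff_continuousAt]
  intro ξ
  have hpow : Continuous fun ξ => N.F ξ ^ (p - 1) :=
    N.continuous.rpow_const fun _ => Or.inr (by linarith)
  rcases eq_or_ne ξ 0 with rfl | hξ
  · obtain ⟨M, hM, hle⟩ := N.exists_le_mul_norm
    rw [ContinuousAt, N.flux_zero hp]
    refine squeeze_zero_norm (a := fun ξ => N.F ξ ^ (p - 1) * M) (fun η => ?_) ?_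
    · rcases eq_or_ne η 0 with rfl | hη
      · rw [N.flux_zero hp, norm_zero]
        exact mul_nonneg (Real.rpow_nonneg (N.nonneg _) _) hM.le
      · rw [flux, norm_smul, Real.norm_of_nonneg (Real.rpow_nonneg (N.nonneg _) _)]
        exact mul_le_mul_of_nonneg_left (N.norm_gradient_le hle hη)
          (Real.rpow_nonneg (N.nonneg _) _)
    · have h := (hpow.mul_const M).tendsto 0
      rwa [N.map_zero, Real.zero_rpow (by linarith), zero_mul] at h
  · have h1 : ContinuousAt (fderiv ℝ N.F) ξ :=
      ((N.contDiffAt hξ).of_le (m := 1) (WithTop.coe_le_coe.2 le_top)).continuousAt_fderiv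
        (by norm_num)
    exact hpow.continuousAt.smul
      ((InnerProductSpace.toDual ℝ (En n)).symm.continuous.continuousAt.comp h1)

lemma rpow_sub_mul_sub_nonneg {a b s : ℝ} (ha : 0 ≤ a) (hb : 0 ≤ b) (hs : 0 < s) :
    0 ≤ (a ^ s - b ^ s) * (a - b) := by
  rcases le_total a b with h | h
  · exact mul_nonneg_of_nonpos_of_nonpos
      (sub_nonpos.2 (Real.rpow_le_rpow ha h hs.le)) (sub_nonpos.2 h)
  · exact mul_nonneg (sub_nonneg.2 (Real.rpow_le_rpow hb h hs.le)) (sub_nonneg.2 h)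

lemma rpow_eq_rpow_sub_one_mul {a : ℝ} (ha : 0 ≤ a) (hp : 1 < p) :
    a ^ p = a ^ (p - 1) * a := by
  rcases ha.eq_or_lt with rfl | h
  · rw [Real.zero_rpow (by linarith), mul_zero]
  · rw [← Real.rpow_add_one h.ne', sub_add_cancel]

lemma inner_flux_sub (hp : 1 < p) (ξ η : En n) :
    ⟪N.flux p ξ - N.flux p η, ξ - η⟫ =
      (N.F ξ ^ (p - 1) - N.F η ^ (p - 1)) * (N.F ξ - N.F η) +
      (N.F ξ ^ (p - 1) * N.F η - ⟪N.flux p ξ, η⟫) +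
      (N.F η ^ (p - 1) * N.F ξ - ⟪N.flux p η, ξ⟫) := by
  rw [inner_sub_left, inner_sub_right, inner_sub_right, N.inner_flux_self hp,
    N.inner_flux_self hp, rpow_eq_rpow_sub_one_mul (N.nonneg ξ) hp,
    rpow_eq_rpow_sub_one_mul (N.nonneg η) hp]
  ring

/-- The flux is monotone. -/
lemma inner_flux_sub_nonneg (hp : 1 < p) (ξ η : En n) :
    0 ≤ ⟪N.flux p ξ - N.flux p η, ξ - η⟫ := by
  rw [N.inner_flux_sub hp]
  have h1 := rpow_sub_mul_sub_nonneg (N.nonneg ξ) (N.nonneg η) (by linarith : 0 < p - 1)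
  have h2 := N.inner_flux_le hp ξ η
  have h3 := N.inner_flux_le hp η ξ
  linarith

/-- The flux is strictly monotone. -/
lemma eq_of_inner_flux_sub_eq_zero (hp : 1 < p) {ξ η : En n}
    (h : ⟪N.flux p ξ - N.flux p η, ξ - η⟫ = 0) : ξ = η := by
  rw [N.inner_flux_sub hp] at h
  have hp' : 0 < p - 1 := by linarith
  have h1 := rpow_sub_mul_sub_nonneg (N.nonneg ξ) (N.nonneg η) hp'
  have h2 := N.inner_flux_le hp ξ η
  have h3 := N.inner_flux_le hp η ξ
  have h4 : (N.F ξ ^ (p - 1) - N.F η ^ (p - 1)) * (N.F ξ - N.F η) = 0 := by linarith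
  have h5 : N.F ξ = N.F η := by
    rcases mul_eq_zero.1 h4 with h6 | h6
    · exact (Real.rpow_left_inj (N.nonneg ξ) (N.nonneg η) hp'.ne').1 (sub_eq_zero.1 h6)
    · exact sub_eq_zero.1 h6
  rcases eq_or_ne ξ 0 with rfl | hξ
  · by_contra h0
    exact (N.pos η (Ne.symm h0)).ne' (by rw [← h5, N.map_zero])
  · have h6 : N.F ξ ^ (p - 1) * N.F η = ⟪N.flux p ξ, η⟫ := by linarith
    rw [flux, real_inner_smul_left] at h6
    have h7 := mul_left_cancel₀ (Real.rpow_pos_of_pos (N.pos ξ hξ) _).ne' h6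
    exact N.eq_of_inner_eq (N.inner_gradient_le hξ) (N.inner_gradient_self hξ) h7.symm h5

section Polar

lemma isCompact_indicatrix : IsCompact {ξ | N.F ξ = 1} := by
  obtain ⟨m, -, hm⟩ := N.exists_norm_le_mul
  refine Metric.isCompact_of_isClosed_isBounded (isClosed_eq N.continuous continuous_const) ?_
  refine (Metric.isBounded_closedBall (x := (0 : En n)) (r := m)).subset fun ξ hξ => ?_
  simpa [show N.F ξ = 1 from hξ] using hm ξ

variable [Nontrivial (En n)]

lemma exists_polarF_eq (x : En n) :
    ∃ ξ, N.F ξ = 1 ∧ ⟪ξ, x⟫ = polarF N x ∧ ∀ ζ, ⟪ζ, x⟫ ≤ polarF N x * N.F ζ := by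
  have hnorm : ∀ ζ : En n, ζ ≠ 0 → N.F ((N.F ζ)⁻¹ • ζ) = 1 := fun ζ hζ => by
    rw [N.homog _ (inv_nonneg.2 (N.nonneg ζ)), inv_mul_cancel₀ (N.pos ζ hζ).ne']
  have hne : {ξ | N.F ξ = 1}.Nonempty := by
    obtain ⟨ζ, hζ⟩ := exists_ne (0 : En n)
    exact ⟨_, hnorm ζ hζ⟩
  obtain ⟨ξ, hξ, hmax⟩ := N.isCompact_indicatrix.exists_isMaxOn hne
    (f := fun ξ : En n => ⟪ξ, x⟫) (by fun_prop)
  have hξ1 : N.F ξ = 1 := hξ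
  have hξ0 : ξ ≠ 0 := by rintro rfl; simp [N.map_zero] at hξ1
  have hle : ∀ ζ : En n, ζ ≠ 0 → ⟪ζ, x⟫ / N.F ζ ≤ ⟪ξ, x⟫ := fun ζ hζ => by
    have h := hmax (hnorm ζ hζ)
    simp only [mem_ofPred_eq, real_inner_smul_left] at h
    rwa [div_eq_inv_mul]
  have hpol : polarF N x = ⟪ξ, x⟫ := by
    refine IsGreatest.csSup_eq ⟨⟨ξ, hξ0, by rw [hξ1, div_one]⟩, ?_⟩
    rintro c ⟨ζ, hζ, rfl⟩
    exact hle ζ hζ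
  refine ⟨ξ, hξ1, hpol.symm, fun ζ => ?_⟩
  rcases eq_or_ne ζ 0 with rfl | hζ
  · simp [N.map_zero]
  · rw [hpol, ← div_le_iff₀ (N.pos ζ hζ)]
    exact hle ζ hζ

/-- The point of the indicatrix at which the supremum defining `F^o` is attained. -/
def dualPoint (x : En n) : En n := (N.exists_polarF_eq x).choose

lemma map_dualPoint (x : En n) : N.F (N.dualPoint x) = 1 :=
  (N.exists_polarF_eq x).choose_spec.1

lemma inner_dualPoint (x : En n) : ⟪N.dualPoint x, x⟫ = polarF N x :=
  (N.exists_polarF_eq x).choose_spec.2.1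

lemma inner_le_polarF_mul (x ζ : En n) : ⟪ζ, x⟫ ≤ polarF N x * N.F ζ :=
  (N.exists_polarF_eq x).choose_spec.2.2 ζ

lemma polarF_zero : polarF N 0 = 0 := by
  rw [← N.inner_dualPoint, inner_zero_right]

lemma polarF_pos {x : En n} (hx : x ≠ 0) : 0 < polarF N x := by
  have h := N.inner_le_polarF_mul x x
  have h1 : 0 < ⟪x, x⟫ := real_inner_self_pos.2 hx
  exact pos_of_mul_pos_left (h1.trans_le h) (N.nonneg x)

lemma polarF_nonneg (x : En n) : 0 ≤ polarF N x := by
  rcases eq_or_ne x 0 with rfl | hx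
  · exact N.polarF_zero.ge
  · exact (N.polarF_pos hx).le

lemma exists_norm_le_mul_polarF : ∃ M : ℝ, 0 < M ∧ ∀ x, ‖x‖ ≤ M * polarF N x := by
  obtain ⟨M, hM, hle⟩ := N.exists_le_mul_norm
  refine ⟨M, hM, fun x => ?_⟩
  rcases eq_or_ne x 0 with rfl | hx
  · simp [N.polarF_zero]
  · have h := (N.inner_le_polarF_mul x x).trans
      (mul_le_mul_of_nonneg_left (hle x) (N.polarF_nonneg x))
    rw [real_inner_self_eq_norm_sq] at h
    have := norm_pos_iff.2 hx
    nlinarith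

lemma polarF_sub_le (x y : En n) : polarF N y - polarF N x ≤ ⟪N.dualPoint y, y - x⟫ := by
  have := N.inner_le_polarF_mul x (N.dualPoint y)
  rw [N.map_dualPoint, mul_one] at this
  rw [inner_sub_right, N.inner_dualPoint]
  linarith

lemma continuous_polarF : Continuous (polarF N) := by
  obtain ⟨m, hm0, hm⟩ := N.exists_norm_le_mul
  have key : ∀ x y, polarF N y ≤ polarF N x + m * dist y x := fun x y => by
    have h1 := N.polarF_sub_le x y
    have h2 := real_inner_le_norm (N.dualPoint y) (y - x)
    have h3 := hm (N.dualPoint y)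
    rw [N.map_dualPoint, mul_one] at h3
    rw [dist_eq_norm]
    nlinarith [norm_nonneg (y - x)]
  exact (LipschitzWith.of_le_add_mul ⟨m, hm0.le⟩ fun x y => key y x).continuous

lemma dualPoint_unique {x ξ : En n} (hx : x ≠ 0) (hξ : N.F ξ = 1) (h : ⟪ξ, x⟫ = polarF N x) :
    ξ = N.dualPoint x := by
  have hp := N.polarF_pos hx
  have hinner : ∀ ζ : En n, ⟪(polarF N x)⁻¹ • x, ζ⟫ = (polarF N x)⁻¹ * ⟪ζ, x⟫ := fun ζ => by
    rw [real_inner_smul_left, real_inner_comm]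
  refine N.eq_of_inner_eq (ν := (polarF N x)⁻¹ • x) (fun ζ => ?_) ?_ ?_ ?_
  · rw [hinner, inv_mul_le_iff₀ hp]
    exact N.inner_le_polarF_mul x ζ
  · rw [hinner, h, hξ, inv_mul_cancel₀ hp.ne']
  · rw [hinner, N.inner_dualPoint, N.map_dualPoint, inv_mul_cancel₀ hp.ne']
  · rw [hξ, N.map_dualPoint]

lemma continuousAt_dualPoint {x : En n} (hx : x ≠ 0) : ContinuousAt N.dualPoint x := by
  refine N.isCompact_indicatrix.tendsto_nhds_of_unique_mapClusterPt
    (Eventually.of_forall N.map_dualPoint) fun ζ hζ hcl => ?_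
  obtain ⟨U, hU, hlim⟩ := mapClusterPt_iff_ultrafilter.1 hcl
  refine N.dualPoint_unique hx hζ ?_
  have h1 : Tendsto (fun y => ⟪N.dualPoint y, y⟫) U (𝓝 ⟪ζ, x⟫) := hlim.inner hU
  have h2 : Tendsto (polarF N) U (𝓝 (polarF N x)) := (N.continuous_polarF.tendsto x).mono_left hU
  simp only [N.inner_dualPoint] at h1
  exact tendsto_nhds_unique h1 h2

/-- Off the origin, `F^o` is differentiable and its gradient is the dual point. -/
lemma hasGradientAt_polarF {x : En n} (hx : x ≠ 0) :
    HasGradientAt (polarF N) (N.dualPoint x) x := by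
  rw [hasGradientAt_iff_isLittleO, Asymptotics.isLittleO_iff]
  intro ε hε
  have hc := Metric.continuousAt_iff'.1 (N.continuousAt_dualPoint hx) ε hε
  filter_upwards [hc] with y hy
  have h1 := N.polarF_sub_le x y
  have h2 := N.polarF_sub_le y x
  have h3 := real_inner_le_norm (N.dualPoint y - N.dualPoint x) (y - x)
  rw [inner_sub_left] at h3
  rw [← neg_sub y x, inner_neg_right] at h2
  rw [dist_eq_norm] at hy
  rw [Real.norm_of_nonneg (by linarith)]
  nlinarith [norm_nonneg (y - x)]

lemma dualPoint_ne_zero (x : En n) : N.dualPoint x ≠ 0 := by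
  intro h
  have := N.map_dualPoint x
  rw [h, N.map_zero] at this
  exact zero_ne_one this

/-- `F_ξ(∇F^o(x)) = x / F^o(x)`. -/
lemma gradient_dualPoint {x : En n} (hx : x ≠ 0) :
    gradient N.F (N.dualPoint x) = (polarF N x)⁻¹ • x := by
  have hp := N.polarF_pos hx
  refine ext_inner_right ℝ fun η => ?_
  have h1 := (N.hasDerivAt_line (N.dualPoint_ne_zero x) η).const_mul (polarF N x)
  have h2 : HasDerivAt (fun t : ℝ => ⟪N.dualPoint x, x⟫ + t * ⟪η, x⟫) ⟪η, x⟫ 0 := by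
    simpa using ((hasDerivAt_id (0 : ℝ)).mul_const ⟪η, x⟫).const_add ⟪N.dualPoint x, x⟫
  have hmin : IsLocalMin (fun t : ℝ => polarF N x * N.F (N.dualPoint x + t • η) -
      (⟪N.dualPoint x, x⟫ + t * ⟪η, x⟫)) 0 := by
    refine Eventually.of_forall fun t => ?_
    have := N.inner_le_polarF_mul x (N.dualPoint x + t • η)
    rw [inner_add_left, real_inner_smul_left] at this
    simp only [zero_smul, add_zero, N.map_dualPoint, N.inner_dualPoint, zero_mul, mul_one,
      sub_self] at this ⊢
    linarith
  have h3 := hmin.hasDerivAt_eq_zero (h1.sub h2)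
  rw [real_inner_smul_left, real_inner_comm η x, eq_inv_mul_iff_mul_eq₀ hp.ne']
  linarith

end Polar

end MinkowskiNorm

section TestFunctions

open scoped Convolution

variable {n : ℕ} {Ω : Set (En n)}

lemma continuous_inner_of_tsupport_subset {V : Type*} [NormedAddCommGroup V]
    [InnerProductSpace ℝ V] {X Y : En n → V} (hΩ : IsOpen Ω) (hX : ContinuousOn X Ω)
    (hY : Continuous Y) (hs : tsupport Y ⊆ Ω) : Continuous fun x => ⟪X x, Y x⟫ := by
  refine continuous_of_tsupport fun x hx => ?_
  have hsub : tsupport (fun x => ⟪X x, Y x⟫) ⊆ tsupport Y :=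
    closure_mono fun y hy h0 => hy (by simp [h0])
  exact (hX.continuousAt (hΩ.mem_nhds (hs (hsub hx)))).inner hY.continuousAt

lemma integrable_inner_of_tsupport_subset {V : Type*} [NormedAddCommGroup V]
    [InnerProductSpace ℝ V] {X Y : En n → V} (hΩ : IsOpen Ω) (hX : ContinuousOn X Ω)
    (hY : Continuous Y) (hc : HasCompactSupport Y) (hs : tsupport Y ⊆ Ω) :
    Integrable fun x => ⟪X x, Y x⟫ :=
  (continuous_inner_of_tsupport_subset hΩ hX hY hs).integrable_of_hasCompactSupport
    (hc.mono fun y hy h0 => hy (by simp [h0]))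

lemma integrable_mul_of_tsupport_subset {f g : En n → ℝ} (hΩ : IsOpen Ω)
    (hf : ContinuousOn f Ω) (hg : Continuous g) (hc : HasCompactSupport g)
    (hs : tsupport g ⊆ Ω) : Integrable fun x => f x * g x := by
  simpa [mul_comm] using integrable_inner_of_tsupport_subset hΩ hf hg hc hs

lemma continuous_gradient {ψ : En n → ℝ} (hψ : ContDiff ℝ 1 ψ) : Continuous (gradient ψ) :=
  (InnerProductSpace.toDual ℝ (En n)).symm.continuous.comp (hψ.continuous_fderiv one_ne_zero)

lemma support_gradient_subset (ψ : En n → ℝ) : Function.support (gradient ψ) ⊆ tsupport ψ := by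
  intro x hx
  refine support_fderiv_subset ℝ fun h0 => hx ?_
  rw [gradient, h0, map_zero]

lemma tsupport_gradient_subset (ψ : En n → ℝ) : tsupport (gradient ψ) ⊆ tsupport ψ :=
  closure_minimal (support_gradient_subset ψ) (isClosed_tsupport ψ)

lemma HasCompactSupport.gradient {ψ : En n → ℝ} (hψ : HasCompactSupport ψ) :
    HasCompactSupport (gradient ψ) :=
  hψ.mono' (support_gradient_subset ψ)

/-- Approximation of a compactly supported `C¹` function by smooth functions, in `C¹` norm and
with control of the support. -/
lemma exists_contDiff_approx {ψ : En n → ℝ} (hψ : ContDiff ℝ 1 ψ) (hc : HasCompactSupport ψ)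
    {δ ε : ℝ} (hδ : 0 < δ) (hε : 0 < ε) :
    ∃ φ : En n → ℝ, ContDiff ℝ (⊤ : ℕ∞) φ ∧ tsupport φ ⊆ cthickening δ (tsupport ψ) ∧
      (∀ x, |φ x - ψ x| ≤ ε) ∧ ∀ x, ‖gradient φ x - gradient ψ x‖ ≤ ε := by
  have hψ' : Continuous (fderiv ℝ ψ) := hψ.continuous_fderiv one_ne_zero
  obtain ⟨δ₁, hδ₁, h₁⟩ := Metric.uniformContinuous_iff.1
    (hc.uniformContinuous_of_continuous hψ.continuous) ε hε
  obtain ⟨δ₂, hδ₂, h₂⟩ := Metric.uniformContinuous_iff.1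
    ((hc.fderiv ℝ).uniformContinuous_of_continuous hψ') ε hε
  set R := min δ (min δ₁ δ₂) with hR
  have hR0 : 0 < R := by positivity
  let ρ : ContDiffBump (0 : En n) := ⟨R / 2, R, by positivity, by linarith⟩
  have hloc : LocallyIntegrable (ρ.normed volume) :=
    (ρ.continuous_normed (μ := volume)).locallyIntegrable
  set φ : En n → ℝ := (ρ.normed volume ⋆[ContinuousLinearMap.lsmul ℝ ℝ, volume] ψ) with hφ
  have hderiv : ∀ x, HasFDerivAt φ
      ((ρ.normed volume ⋆[ContinuousLinearMap.lsmul ℝ ℝ, volume] fderiv ℝ ψ) x) x := fun x =>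
    hc.hasFDerivAt_convolution_right (ContinuousLinearMap.lsmul ℝ ℝ) hloc hψ x
  refine ⟨φ, ?_, ?_, fun x => ?_, fun x => ?_⟩
  · exact ρ.hasCompactSupport_normed.contDiff_convolution_left _ ρ.contDiff_normed
      hψ.continuous.locallyIntegrable
  · refine closure_minimal ?_ isClosed_cthickening
    refine (support_convolution_subset (ContinuousLinearMap.lsmul ℝ ℝ)).trans ?_
    rintro _ ⟨a, ha, b, hb, rfl⟩
    rw [ρ.support_normed_eq, mem_ball_zero_iff] at ha
    refine mem_cthickening_of_dist_le _ b δ _ (subset_tsupport _ hb) ?_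
    simpa using ha.le.trans (min_le_left _ _)
  · rw [← Real.dist_eq]
    refine ρ.dist_normed_convolution_le hψ.continuous.aestronglyMeasurable fun y hy => ?_
    exact (h₁ ((mem_ball.1 hy).trans_le ((min_le_right _ _).trans (min_le_left _ _)))).le
  · rw [gradient, gradient, ← map_sub, LinearIsometryEquiv.norm_map, (hderiv x).fderiv,
      ← dist_eq_norm]
    refine ρ.dist_normed_convolution_le hψ'.aestronglyMeasurable fun y hy => ?_
    exact (h₂ ((mem_ball.1 hy).trans_le ((min_le_right _ _).trans (min_le_right _ _)))).le

/-- A weak divergence identity tested against smooth functions also holds for `C¹` test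
functions. -/
lemma integral_eq_neg_of_contDiff_one (hΩ : IsOpen Ω) {X : En n → En n} {f : En n → ℝ}
    (hX : ContinuousOn X Ω) (hf : ContinuousOn f Ω)
    (h : ∀ ψ, IsTestFun Ω ψ → ∫ x in Ω, ⟪X x, gradient ψ x⟫ = -∫ x in Ω, f x * ψ x)
    {ψ : En n → ℝ} (hψ : ContDiff ℝ 1 ψ) (hc : HasCompactSupport ψ) (hs : tsupport ψ ⊆ Ω) :
    ∫ x in Ω, ⟪X x, gradient ψ x⟫ = -∫ x in Ω, f x * ψ x := by
  obtain ⟨δ, hδ, hK⟩ := hc.isCompact.exists_cthickening_subset_open hΩ hs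
  set K := cthickening δ (tsupport ψ)
  have hKc : IsCompact K := hc.isCompact.cthickening
  obtain ⟨A, hA⟩ := hKc.exists_bound_of_continuousOn (hX.mono hK)
  obtain ⟨B, hB⟩ := hKc.exists_bound_of_continuousOn (hf.mono hK)
  have hint : ∀ {η : En n → ℝ}, ContDiff ℝ 1 η → HasCompactSupport η → tsupport η ⊆ Ω →
      IntegrableOn (fun x => ⟪X x, gradient η x⟫) Ω ∧ IntegrableOn (fun x => f x * η x) Ω :=
    fun hη hηc hηs => ⟨(integrable_inner_of_tsupport_subset hΩ hX (continuous_gradient hη)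
      hηc.gradient ((tsupport_gradient_subset _).trans hηs)).integrableOn,
      (integrable_mul_of_tsupport_subset hΩ hf hη.continuous hηc hηs).integrableOn⟩
  have key : ∀ ε : ℝ, 0 < ε → |(∫ x in Ω, ⟪X x, gradient ψ x⟫) + ∫ x in Ω, f x * ψ x| ≤
      ε * ((|A| + |B|) * volume.real K) := by
    intro ε hε
    obtain ⟨φ, hφ, hφs, hφ0, hφ1⟩ := exists_contDiff_approx hψ hc hδ hε
    have hφc : HasCompactSupport φ := hKc.of_isClosed_subset (isClosed_tsupport φ) hφs
    have hφ' : ContDiff ℝ 1 φ := hφ.of_le (WithTop.coe_le_coe.2 le_top)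
    have hφΩ := hφs.trans hK
    obtain ⟨i1, i2⟩ := hint hψ hc hs
    obtain ⟨i3, i4⟩ := hint hφ' hφc hφΩ
    have h0 := h φ ⟨hφ, hφc, hφΩ⟩
    have heq : (∫ x in Ω, ⟪X x, gradient ψ x⟫) + ∫ x in Ω, f x * ψ x =
        ∫ x in Ω, (⟪X x, gradient ψ x - gradient φ x⟫ + f x * (ψ x - φ x)) := by
      have e : ∀ x, ⟪X x, gradient ψ x - gradient φ x⟫ + f x * (ψ x - φ x) =
          (⟪X x, gradient ψ x⟫ + f x * ψ x) - (⟪X x, gradient φ x⟫ + f x * φ x) := fun x => by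
        rw [inner_sub_right]; ring
      simp only [e]
      have i12 : IntegrableOn (fun x => ⟪X x, gradient ψ x⟫ + f x * ψ x) Ω := i1.add i2
      have i34 : IntegrableOn (fun x => ⟪X x, gradient φ x⟫ + f x * φ x) Ω := i3.add i4
      rw [integral_sub i12 i34, integral_add i1 i2, integral_add i3 i4, h0]
      ring
    have hzero : ∀ x ∈ Ω \ K,
        ⟪X x, gradient ψ x - gradient φ x⟫ + f x * (ψ x - φ x) = 0 := by
      intro x hx
      have hxψ : x ∉ tsupport ψ := fun hx' => hx.2 (self_subset_cthickening _ hx')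
      have hxφ : x ∉ tsupport φ := fun hx' => hx.2 (hφs hx')
      have g1 : gradient ψ x = 0 := by
        by_contra h0; exact hxψ (support_gradient_subset ψ h0)
      have g2 : gradient φ x = 0 := by
        by_contra h0; exact hxφ (support_gradient_subset φ h0)
      rw [g1, g2, image_eq_zero_of_notMem_tsupport hxψ, image_eq_zero_of_notMem_tsupport hxφ]
      simp
    rw [heq, setIntegral_eq_of_subset_of_forall_sdiff_eq_zero hΩ.measurableSet hK hzero,
      ← Real.norm_eq_abs]
    refine (norm_setIntegral_le_of_norm_le_const (C := ε * (|A| + |B|))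
      hKc.measure_lt_top fun x hx => ?_).trans (le_of_eq (by ring))
    have b1 : |⟪X x, gradient ψ x - gradient φ x⟫| ≤ |A| * ε := by
      refine (abs_real_inner_le_norm _ _).trans ?_
      rw [norm_sub_rev (gradient ψ x)]
      exact mul_le_mul ((hA x hx).trans (le_abs_self A)) (hφ1 x) (norm_nonneg _) (abs_nonneg _)
    have b2 : |f x * (ψ x - φ x)| ≤ |B| * ε := by
      rw [abs_mul, abs_sub_comm (ψ x)]
      exact mul_le_mul ((hB x hx).trans (le_abs_self B)) (hφ0 x) (abs_nonneg _) (abs_nonneg _)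
    rw [Real.norm_eq_abs]
    linarith [abs_add_le ⟪X x, gradient ψ x - gradient φ x⟫ (f x * (ψ x - φ x))]
  have hlim : Tendsto (fun ε : ℝ => ε * ((|A| + |B|) * volume.real K)) (𝓝[>] 0) (𝓝 0) := by
    have h1 : Tendsto (fun ε : ℝ => ε * ((|A| + |B|) * volume.real K)) (𝓝 0)
        (𝓝 (0 * ((|A| + |B|) * volume.real K))) := by
      exact (continuous_id.mul continuous_const).tendsto 0
    rw [zero_mul] at h1
    exact h1.mono_left nhdsWithin_le_nhds
  have h0 := ge_of_tendsto hlim (by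
    filter_upwards [self_mem_nhdsWithin] with ε hε using key ε hε)
  exact eq_neg_of_add_eq_zero_left (abs_nonpos_iff.1 h0)

/-- The integral of the divergence of `x ↦ h(x) (x - x₀)` vanishes. -/
lemma integral_fderiv_sub_apply (x₀ : En n) {h : En n → ℝ} (hh : ContDiff ℝ 1 h)
    (hc : HasCompactSupport h) :
    ∫ x, fderiv ℝ h x (x - x₀) = -(n * ∫ x, h x) := by
  have hh' : Continuous (fderiv ℝ h) := hh.continuous_fderiv one_ne_zero
  have hcoord : ∀ (i : Fin n) (x : En n), HasFDerivAt (fun x : En n => (x - x₀) i)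
      (EuclideanSpace.proj i : En n →L[ℝ] ℝ) x := fun i x =>
    (EuclideanSpace.proj i : En n →L[ℝ] ℝ).hasFDerivAt.comp x
      ((hasFDerivAt_id x).sub_const x₀)
  have hcont : ∀ i, Continuous fun x : En n => (x - x₀) i := fun i =>
    (EuclideanSpace.proj i : En n →L[ℝ] ℝ).continuous.comp (continuous_id.sub continuous_const)
  have hint : ∀ i : Fin n, Integrable fun x =>
      fderiv ℝ h x (EuclideanSpace.single i 1) * (x - x₀) i := fun i =>
    ((hh'.clm_apply continuous_const).mul (hcont i)).integrable_of_hasCompactSupport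
      ((hc.fderiv_apply ℝ _).mul_right)
  have hparts : ∀ i : Fin n, ∫ x, fderiv ℝ h x (EuclideanSpace.single i 1) * (x - x₀) i =
      -∫ x, h x := by
    intro i
    have h1 : ∀ x, fderiv ℝ (fun x : En n => (x - x₀) i) x (EuclideanSpace.single i 1) = 1 :=
      fun x => by rw [(hcoord i x).fderiv]; simp
    have := integral_mul_fderiv_eq_neg_fderiv_mul_of_integrable (μ := volume) (f := h)
      (g := fun x : En n => (x - x₀) i) (v := EuclideanSpace.single i (1 : ℝ)) (hint i)
      (by simpa only [h1, mul_one] using hh.continuous.integrable_of_hasCompactSupport hc)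
      ((hh.continuous.mul (hcont i)).integrable_of_hasCompactSupport hc.mul_right)
      (fun x _ => hh.differentiable one_ne_zero x)
      (fun x _ => (hcoord i x).differentiableAt)
    simp only [h1, mul_one] at this
    rw [this, neg_neg]
  have hexp : ∀ x, fderiv ℝ h x (x - x₀) =
      ∑ i, fderiv ℝ h x (EuclideanSpace.single i 1) * (x - x₀) i := fun x => by
    conv_lhs => rw [← (EuclideanSpace.basisFun (Fin n) ℝ).sum_repr (x - x₀)]
    simp [mul_comm]
  simp only [hexp]
  rw [integral_finsetSum _ fun i _ => hint i]
  simp only [hparts]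
  simp

end TestFunctions

lemma hasDerivAt_max_zero_sq (t : ℝ) :
    HasDerivAt (fun t : ℝ => max t 0 ^ 2) (2 * max t 0) t := by
  rcases lt_trichotomy t 0 with ht | rfl | ht
  · rw [max_eq_right ht.le, mul_zero]
    refine (hasDerivAt_const t (0 : ℝ)).congr_of_eventuallyEq ?_
    filter_upwards [Iio_mem_nhds ht] with s hs
    rw [max_eq_right (mem_Iio.1 hs).le, zero_pow two_ne_zero]
  · rw [max_self, mul_zero, hasDerivAt_iff_isLittleO_nhds_zero]
    have h : (fun h : ℝ => h ^ 2) =o[𝓝 0] fun h : ℝ => h :=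
      Asymptotics.isLittleO_pow_id one_lt_two
    refine Asymptotics.IsBigO.trans_isLittleO (Asymptotics.IsBigO.of_bound 1 ?_) h
    refine Eventually.of_forall fun s => ?_
    rcases le_total s 0 with hs | hs
    · simp [max_eq_right hs, sq_nonneg]
    · simp [max_eq_left hs]
  · rw [max_eq_left ht.le]
    have h : HasDerivAt (fun s : ℝ => s ^ 2) (2 * t) t := by simpa using hasDerivAt_pow 2 t
    refine h.congr_of_eventuallyEq ?_
    filter_upwards [Ioi_mem_nhds ht] with s hs
    rw [max_eq_left (mem_Ioi.1 hs).le]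

lemma contDiff_max_zero_sq : ContDiff ℝ 1 fun t : ℝ => max t 0 ^ 2 := by
  rw [contDiff_one_iff_deriv]
  refine ⟨fun t => (hasDerivAt_max_zero_sq t).differentiableAt, ?_⟩
  rw [funext fun t => (hasDerivAt_max_zero_sq t).deriv]
  fun_prop

section Comparison

lemma contDiff_of_contDiffAt_tsupport {E : Type*} [NormedAddCommGroup E] [NormedSpace ℝ E]
    {f : E → ℝ} {k : WithTop ℕ∞} (h : ∀ x ∈ tsupport f, ContDiffAt ℝ k f x) :
    ContDiff ℝ k f := by
  refine contDiff_iff_contDiffAt.2 fun x => ?_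
  by_cases hx : x ∈ tsupport f
  · exact h x hx
  · exact contDiffAt_const.congr_of_eventuallyEq (notMem_tsupport_iff_eventuallyEq.1 hx)

variable {n : ℕ} {Ω : Set (En n)} {p : ℝ}

lemma continuousOn_gradient {v : En n → ℝ} (hΩ : IsOpen Ω) (hv : ContDiffOn ℝ 1 v Ω) :
    ContinuousOn (gradient v) Ω :=
  (InnerProductSpace.toDual ℝ (En n)).symm.continuous.comp_continuousOn
    (hv.continuousOn_fderiv_of_isOpen hΩ le_rfl)

/-- Comparison principle for `C¹` functions that are weakly Finsler `p`-harmonic. -/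
lemma le_of_weak_pHarmonic (N : MinkowskiNorm n) (hp : 1 < p) (hΩ : IsOpen Ω) (hne : Ω ≠ univ)
    {v w : En n → ℝ} (hv : ContDiffOn ℝ 1 v Ω) (hw : ContDiffOn ℝ 1 w Ω)
    (hv0 : ∀ η : En n → ℝ, ContDiff ℝ 1 η → HasCompactSupport η → tsupport η ⊆ Ω →
      ∫ x in Ω, ⟪N.flux p (-gradient v x), gradient η x⟫ = 0)
    (hw0 : ∀ η : En n → ℝ, ContDiff ℝ 1 η → HasCompactSupport η → tsupport η ⊆ Ω →
      ∫ x in Ω, ⟪N.flux p (-gradient w x), gradient η x⟫ = 0)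
    (hK : ∀ ε : ℝ, 0 < ε → ∃ K ⊆ Ω, IsCompact K ∧ ∀ x ∈ Ω \ K, w x - v x ≤ ε) :
    ∀ x ∈ Ω, w x ≤ v x := by
  obtain ⟨x₀, hx₀⟩ := (ne_univ_iff_exists_notMem Ω).1 hne
  intro x hx
  refine le_of_forall_pos_le_add fun ε hε => ?_
  obtain ⟨K, hKΩ, hKc, hle⟩ := hK ε hε
  set η : En n → ℝ := Ω.indicator fun x => max (w x - v x - ε) 0 ^ 2 with hη
  have hηΩ : ∀ x ∈ Ω, η =ᶠ[𝓝 x] fun x => max (w x - v x - ε) 0 ^ 2 := fun x hx => by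
    filter_upwards [hΩ.mem_nhds hx] with y hy using indicator_of_mem hy _
  have hts : tsupport η ⊆ K := by
    refine closure_minimal (fun y hy => ?_) hKc.isClosed
    by_contra hyK
    refine hy ?_
    by_cases hyΩ : y ∈ Ω
    · rw [hη, indicator_of_mem hyΩ, max_eq_right (by linarith [hle y ⟨hyΩ, hyK⟩]),
        zero_pow two_ne_zero]
    · rw [hη, indicator_of_notMem hyΩ]
  have hηc : HasCompactSupport η := hKc.of_isClosed_subset (isClosed_tsupport η) hts
  have hηs : tsupport η ⊆ Ω := hts.trans hKΩ
  have hηd : ContDiff ℝ 1 η := contDiff_of_contDiffAt_tsupport fun y hy => by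
    have hyΩ := hηs hy
    refine ContDiffAt.congr_of_eventuallyEq ?_ (hηΩ y hyΩ)
    exact contDiff_max_zero_sq.contDiffAt.comp y
      (((hw.contDiffAt (hΩ.mem_nhds hyΩ)).sub (hv.contDiffAt (hΩ.mem_nhds hyΩ))).sub
        contDiffAt_const)
  have hgrad : ∀ y ∈ Ω, gradient η y =
      (2 * max (w y - v y - ε) 0) • (-gradient v y - -gradient w y) := fun y hy => by
    have hdw := ((hw.contDiffAt (hΩ.mem_nhds hy)).differentiableAt one_ne_zero).hasFDerivAt
    have hdv := ((hv.contDiffAt (hΩ.mem_nhds hy)).differentiableAt one_ne_zero).hasFDerivAt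
    have h1 := ((hasDerivAt_max_zero_sq (w y - v y - ε)).comp_hasFDerivAt y
      ((hdw.sub hdv).sub_const ε)).congr_of_eventuallyEq (hηΩ y hy)
    rw [gradient, h1.fderiv, map_smul, map_sub]
    simp only [gradient]
    congr 1
    abel
  have hi : ∀ {z : En n → ℝ}, ContDiffOn ℝ 1 z Ω →
      IntegrableOn (fun y => ⟪N.flux p (-gradient z y), gradient η y⟫) Ω := fun hz =>
    (integrable_inner_of_tsupport_subset hΩ
      ((N.continuous_flux hp).comp_continuousOn (continuousOn_gradient hΩ hz).neg)
      (continuous_gradient hηd) hηc.gradient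
      ((tsupport_gradient_subset η).trans hηs)).integrableOn
  have hdiff : ∀ y ∈ Ω, ⟪N.flux p (-gradient v y), gradient η y⟫ -
      ⟪N.flux p (-gradient w y), gradient η y⟫ = 2 * max (w y - v y - ε) 0 *
      ⟪N.flux p (-gradient v y) - N.flux p (-gradient w y), -gradient v y - -gradient w y⟫ :=
    fun y hy => by rw [← inner_sub_left, hgrad y hy, real_inner_smul_right]
  have hzero : ∫ y in Ω, (⟪N.flux p (-gradient v y), gradient η y⟫ -
      ⟪N.flux p (-gradient w y), gradient η y⟫) = 0 := by
    rw [integral_sub (hi hv) (hi hw), hv0 η hηd hηc hηs, hw0 η hηd hηc hηs, sub_zero]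
  rw [setIntegral_eq_zero_iff_of_nonneg_ae] at hzero
  rotate_left
  · filter_upwards [ae_restrict_mem hΩ.measurableSet] with y hy
    rw [hdiff y hy]
    exact mul_nonneg (by positivity) (N.inner_flux_sub_nonneg hp _ _)
  · exact (hi hv).sub (hi hw)
  have hae : ∀ᵐ y, gradient η y = 0 := by
    filter_upwards [(ae_restrict_iff' hΩ.measurableSet).1 hzero] with y hy
    by_cases hyΩ : y ∈ Ω
    · have h1 := hy hyΩ
      rw [hdiff y hyΩ] at h1
      rw [hgrad y hyΩ]
      rcases mul_eq_zero.1 h1 with h2 | h2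
      · rw [h2, zero_smul]
      · rw [N.eq_of_inner_flux_sub_eq_zero hp h2, sub_self, smul_zero]
    · by_contra h0
      exact hyΩ (hηs (support_gradient_subset η h0))
  have hgz : gradient η = fun _ => 0 :=
    (continuous_gradient hηd).ae_eq_iff_eq volume continuous_const |>.1 hae
  have hconst := is_const_of_fderiv_eq_zero (𝕜 := ℝ) (hηd.differentiable one_ne_zero)
    (fun y => by rw [← toDual_gradient, hgz, map_zero]) x x₀
  rw [hη, indicator_of_notMem hx₀, indicator_of_mem hx] at hconst
  have := le_max_left (w x - v x - ε) 0
  rw [pow_eq_zero_iff two_ne_zero] at hconst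
  linarith

/-- If `u` solves `div(F(∇u)^{p-1} F_ξ(∇u)) = F(∇u)^p` weakly, then the field
`e^{-u} F(∇u)^{p-1} F_ξ(∇u)` is weakly divergence free. -/
lemma IsWeakPSol.integral_exp_mul_inner_eq_zero {N : MinkowskiNorm n} {u : En n → ℝ}
    (hsol : IsWeakPSol N Ω p u) (hp : 1 < p) (hΩ : IsOpen Ω) (hu : ContDiffOn ℝ 1 u Ω)
    {η : En n → ℝ} (hη : ContDiff ℝ 1 η) (hc : HasCompactSupport η) (hs : tsupport η ⊆ Ω) :
    ∫ x in Ω, Real.exp (-u x) * ⟪N.flux p (gradient u x), gradient η x⟫ = 0 := by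
  have hgu := continuousOn_gradient hΩ hu
  have hX : ContinuousOn (fun x => N.flux p (gradient u x)) Ω :=
    (N.continuous_flux hp).comp_continuousOn hgu
  have hf : ContinuousOn (fun x => N.F (gradient u x) ^ p) Ω :=
    (N.continuous.comp_continuousOn hgu).rpow_const fun _ _ => Or.inr (by linarith)
  set ψ : En n → ℝ := fun x => Real.exp (-u x) * η x with hψ
  have hsupp : Function.support ψ ⊆ Function.support η := fun x hx h0 => hx (by simp [hψ, h0])
  have hψc : HasCompactSupport ψ := hc.mono hsupp
  have hψs : tsupport ψ ⊆ Ω := (closure_mono hsupp).trans hs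
  have hψd : ContDiff ℝ 1 ψ := contDiff_of_contDiffAt_tsupport fun x hx =>
    (hu.contDiffAt (hΩ.mem_nhds (hψs hx))).neg.exp.mul hη.contDiffAt
  have hweak : ∫ x in Ω, ⟪N.flux p (gradient u x), gradient ψ x⟫ =
      -∫ x in Ω, N.F (gradient u x) ^ p * ψ x := by
    refine integral_eq_neg_of_contDiff_one hΩ hX hf (fun φ hφ => ?_) hψd hψc hψs
    simpa only [MinkowskiNorm.flux, real_inner_smul_left] using hsol φ hφ
  have hpt : ∀ x ∈ Ω, Real.exp (-u x) * ⟪N.flux p (gradient u x), gradient η x⟫ =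
      ⟪N.flux p (gradient u x), gradient ψ x⟫ + N.F (gradient u x) ^ p * ψ x := by
    intro x hx
    have hdu := ((hu.contDiffAt (hΩ.mem_nhds hx)).differentiableAt one_ne_zero).hasFDerivAt
    have hdη := (hη.differentiable one_ne_zero x).hasFDerivAt
    have hdψ : HasFDerivAt ψ _ x := hdu.fun_neg.exp.mul hdη
    have hself := N.inner_flux_self hp (gradient u x)
    rw [real_inner_comm, inner_gradient_left] at hself
    rw [real_inner_comm, inner_gradient_left, real_inner_comm, inner_gradient_left, hdψ.fderiv,
      ← hself]
    simp only [_root_.add_apply, _root_.smul_apply, _root_.neg_apply, smul_eq_mul, hψ]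
    ring
  rw [setIntegral_congr_fun hΩ.measurableSet hpt, integral_add, hweak, neg_add_cancel]
  · exact (integrable_inner_of_tsupport_subset hΩ hX (continuous_gradient hψd) hψc.gradient
      ((tsupport_gradient_subset ψ).trans hψs)).integrableOn
  · exact (integrable_mul_of_tsupport_subset hΩ hf hψd.continuous hψc hψs).integrableOn

end Comparison

namespace MinkowskiNorm

variable {n : ℕ} (N : MinkowskiNorm n) [Nontrivial (En n)]

lemma contDiffAt_polarF {x : En n} (hx : x ≠ 0) : ContDiffAt ℝ 1 (polarF N) x := by
  refine contDiffAt_one_iff.2 ⟨fun y => InnerProductSpace.toDual ℝ (En n) (N.dualPoint y), {0}ᶜ,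
    isOpen_compl_singleton.mem_nhds hx, ?_, fun y hy => (N.hasGradientAt_polarF hy).hasFDerivAt⟩
  exact fun y hy => ((InnerProductSpace.toDual ℝ (En n)).continuous.continuousAt.comp
    (N.continuousAt_dualPoint hy)).continuousWithinAt

lemma hasFDerivAt_polarF_sub {x x₀ : En n} (hx : x - x₀ ≠ 0) :
    HasFDerivAt (fun x => polarF N (x - x₀))
      (InnerProductSpace.toDual ℝ (En n) (N.dualPoint (x - x₀))) x :=
  (hasFDerivAt_comp_sub x₀).2 (N.hasGradientAt_polarF hx).hasFDerivAt

lemma contDiffAt_polarF_sub {x x₀ : En n} (hx : x - x₀ ≠ 0) :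
    ContDiffAt ℝ 1 (fun x => polarF N (x - x₀)) x :=
  ContDiffAt.comp (g := polarF N) (f := fun x => x - x₀) x (N.contDiffAt_polarF hx)
    (contDiffAt_id.sub contDiffAt_const)

/-- The field `y / F^o(y)^n`, `y = x - x₀`, is weakly divergence free off `x₀`. -/
lemma integral_inner_radial_eq_zero (x₀ : En n) {η : En n → ℝ} (hη : ContDiff ℝ 1 η)
    (hc : HasCompactSupport η) (hx₀ : x₀ ∉ tsupport η) :
    ∫ x, ⟪(polarF N (x - x₀) ^ n)⁻¹ • (x - x₀), gradient η x⟫ = 0 := by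
  have hn : n ≠ 0 := by
    rintro rfl
    exact not_subsingleton (En 0) inferInstance
  set h : En n → ℝ := fun x => (polarF N (x - x₀) ^ n)⁻¹ * η x with hh
  have hsupp : Function.support h ⊆ Function.support η := fun x hx h0 => hx (by simp [hh, h0])
  have hhc : HasCompactSupport h := hc.mono hsupp
  have hhd : ContDiff ℝ 1 h := contDiff_of_contDiffAt_tsupport fun x hx => by
    have hx0 : x - x₀ ≠ 0 := sub_ne_zero.2 fun h0 => hx₀ (h0 ▸ closure_mono hsupp hx)
    exact (((N.contDiffAt_polarF_sub hx0).pow n).inv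
      (pow_ne_zero n (N.polarF_pos hx0).ne')).mul hη.contDiffAt
  have hpt : ∀ x, ⟪(polarF N (x - x₀) ^ n)⁻¹ • (x - x₀), gradient η x⟫ =
      fderiv ℝ h x (x - x₀) + n * h x := by
    intro x
    rcases eq_or_ne x x₀ with rfl | hne
    · simp [hh, image_eq_zero_of_notMem_tsupport hx₀]
    have hx0 : x - x₀ ≠ 0 := sub_ne_zero.2 hne
    have hP := N.polarF_pos hx0
    have hdP := N.hasFDerivAt_polarF_sub hx0
    have hd1 := ((hasDerivAt_pow n (polarF N (x - x₀))).fun_inv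
      (pow_ne_zero n hP.ne')).comp_hasFDerivAt x hdP
    have hdh : HasFDerivAt h _ x := hd1.mul (hη.differentiable one_ne_zero x).hasFDerivAt
    rw [hdh.fderiv, real_inner_smul_left, real_inner_comm, inner_gradient_left]
    simp only [_root_.add_apply, _root_.smul_apply, smul_eq_mul,
      InnerProductSpace.toDual_apply_apply, N.inner_dualPoint, hh, Function.comp_apply]
    have hpow := pow_sub_one_mul hn (polarF N (x - x₀))
    have hcalc : -(n * polarF N (x - x₀) ^ (n - 1)) / (polarF N (x - x₀) ^ n) ^ 2 *
        polarF N (x - x₀) = -(n * (polarF N (x - x₀) ^ n)⁻¹) := by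
      have h0 := pow_ne_zero n hP.ne'
      rw [div_mul_eq_mul_div, neg_mul, mul_assoc, hpow]
      field_simp
    rw [hcalc]
    ring
  simp only [hpt]
  have hh' : Continuous fun x => fderiv ℝ h x (x - x₀) :=
    (hhd.continuous_fderiv one_ne_zero).clm_apply (continuous_id.sub continuous_const)
  rw [integral_add (hh'.integrable_of_hasCompactSupport
      ((hhc.fderiv ℝ).mono fun x hx h0 => hx (by simp [h0])))
    ((hhd.continuous.integrable_of_hasCompactSupport hhc).const_mul _),
    integral_fderiv_sub_apply x₀ hhd hhc, integral_const_mul, neg_add_cancel]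

end MinkowskiNorm

section Barrier

variable {n : ℕ} (N : MinkowskiNorm n) [Nontrivial (En n)] {p r : ℝ} {x x₀ : En n}

lemma neg_gradient_rpow_polarF (hr : 0 < r) (γ : ℝ) (hx : x - x₀ ≠ 0) :
    -gradient (fun x => (polarF N (x - x₀) / r) ^ (-γ)) x =
      (γ / r * (polarF N (x - x₀) / r) ^ (-γ - 1)) • N.dualPoint (x - x₀) := by
  have hP := div_pos (N.polarF_pos hx) hr
  have h1 := (((hasDerivAt_id (polarF N (x - x₀))).div_const r).rpow_const
    (p := -γ) (Or.inl hP.ne')).comp_hasFDerivAt x (N.hasFDerivAt_polarF_sub hx)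
  have h2 : HasFDerivAt (fun x => (polarF N (x - x₀) / r) ^ (-γ)) _ x := h1
  rw [gradient, h2.fderiv, map_smul, LinearIsometryEquiv.symm_apply_apply, ← neg_smul, id]
  congr 1
  ring

/-- The flux of the radial barrier `(F^o / r)^{-(n-p)/(p-1)}` is a multiple of `y / F^o(y)^n`. -/
lemma exists_flux_barrier (hp : 1 < p) (hpn : p < n) (hr : 0 < r) (x₀ : En n) :
    ∃ C : ℝ, ∀ x, x - x₀ ≠ 0 →
      N.flux p (-gradient (fun x => (polarF N (x - x₀) / r) ^ (-((n - p) / (p - 1)))) x) =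
        C • (polarF N (x - x₀) ^ n)⁻¹ • (x - x₀) := by
  have hp' : 0 < p - 1 := by linarith
  set γ := (n - p) / (p - 1) with hγ
  have hγ0 : 0 < γ := div_pos (by linarith) hp'
  refine ⟨(γ / r) ^ (p - 1) * r ^ ((n : ℝ) - 1), fun x hx => ?_⟩
  have hP := N.polarF_pos hx
  have hPr := div_pos hP hr
  rw [neg_gradient_rpow_polarF N hr γ hx, N.flux_smul hp (by positivity), MinkowskiNorm.flux,
    N.map_dualPoint, Real.one_rpow, one_smul, N.gradient_dualPoint hx, smul_smul, smul_smul,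
    Real.mul_rpow (by positivity) (by positivity), ← Real.rpow_mul hPr.le]
  have hexp : (-γ - 1) * (p - 1) = -((n : ℝ) - 1) := by
    rw [hγ]; field_simp; ring
  have hpow : polarF N (x - x₀) ^ n = polarF N (x - x₀) ^ ((n : ℝ) - 1) * polarF N (x - x₀) := by
    rw [← Real.rpow_add_one hP.ne', sub_add_cancel, Real.rpow_natCast]
  rw [hexp, Real.rpow_neg hPr.le, Real.div_rpow hP.le hr.le, hpow]
  congr 1
  have h1 : polarF N (x - x₀) ^ ((n : ℝ) - 1) ≠ 0 := (Real.rpow_pos_of_pos hP _).ne'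
  have h2 : r ^ ((n : ℝ) - 1) ≠ 0 := (Real.rpow_pos_of_pos hr _).ne'
  field_simp

end Barrier

lemma flux_exp_neg {n : ℕ} (N : MinkowskiNorm n) {p : ℝ} (hp : 1 < p) {u : En n → ℝ} {x : En n}
    (hu : DifferentiableAt ℝ u x) :
    N.flux p (-gradient (fun x => Real.exp (-(u x) / (p - 1))) x) =
      (((p - 1)⁻¹) ^ (p - 1) * Real.exp (-u x)) • N.flux p (gradient u x) := by
  have hp' : 0 < p - 1 := by linarith
  have h1 : HasFDerivAt (fun x => Real.exp (-(u x) / (p - 1))) _ x :=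
    (((hasDerivAt_id (u x)).fun_neg.div_const (p - 1)).exp).comp_hasFDerivAt x hu.hasFDerivAt
  have h2 : -gradient (fun x => Real.exp (-(u x) / (p - 1))) x =
      ((p - 1)⁻¹ * Real.exp (-(u x) / (p - 1))) • gradient u x := by
    rw [gradient, h1.fderiv, map_smul, ← neg_smul, gradient]
    congr 1
    simp only [id]
    ring
  rw [h2, N.flux_smul hp (by positivity), Real.mul_rpow (by positivity) (by positivity),
    ← Real.exp_mul, div_mul_cancel₀ _ hp'.ne']

/-- If the Wulff shape `W_r(x₀)` is contained in `Ωᶜ`, then the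
solution `u_p` of the approximate problem satisfies
`u_p(x) ≤ (n-p)·log(F^o(x-x₀)/r)` in `Ω`. -/
theorem statement11 (n : ℕ) (N : MinkowskiNorm n)
    (Ω : Set (En n)) (hΩ : IsOpen Ω) (hsb : HasSmoothBoundary Ω)
    (hbd : Bornology.IsBounded Ωᶜ)
    (p : ℝ) (hp1 : 1 < p) (hpn : p < n)
    (u : En n → ℝ) (hC1 : ContDiffOn ℝ 1 u (closure Ω))
    (hsol : IsWeakPSol N Ω p u)
    (hbc : ∀ x ∈ frontier Ω, u x = 0)
    (hlim : Tendsto u (cocompact (En n)) atTop)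
    (r : ℝ) (hr : 0 < r) (x₀ : En n) (hin : Wulff N r x₀ ⊆ Ωᶜ) :
    ∀ x ∈ Ω, u x ≤ (n - p) * Real.log (polarF N (x - x₀) / r) := by
  have hp' : 0 < p - 1 := by linarith
  have hn0 : 0 < n := by exact_mod_cast (by linarith : (0 : ℝ) < n)
  have : Nonempty (Fin n) := ⟨⟨0, hn0⟩⟩
  have : Nontrivial (En n) := inferInstance
  have hu : ContDiffOn ℝ 1 u Ω := hC1.mono subset_closure
  have hcP : Continuous fun x => polarF N (x - x₀) :=
    N.continuous_polarF.comp (continuous_id.sub continuous_const)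
  have hP : ∀ x ∈ closure Ω, r ≤ polarF N (x - x₀) := by
    refine fun x hx => closure_minimal (fun y hy => ?_) (isClosed_le continuous_const hcP) hx
    have hlt : ¬ polarF N (y - x₀) < r := fun hlt => hin (show y ∈ Wulff N r x₀ from hlt) hy
    exact not_lt.1 hlt
  have hx₀ : x₀ ∉ closure Ω := fun h => by
    have := hP x₀ h
    rw [sub_self, N.polarF_zero] at this
    linarith
  have hne : ∀ x ∈ closure Ω, x - x₀ ≠ 0 := fun x hx h0 => hx₀ (sub_eq_zero.1 h0 ▸ hx)
  set γ := (n - p) / (p - 1) with hγ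
  have hγ0 : 0 < γ := div_pos (by linarith) hp'
  set w : En n → ℝ := fun x => (polarF N (x - x₀) / r) ^ (-γ) with hw
  set v : En n → ℝ := fun x => Real.exp (-(u x) / (p - 1)) with hv
  have hwc : ContinuousOn w (closure Ω) := fun x hx =>
    ((hcP.div_const r).continuousAt.rpow_const
      (Or.inl (div_pos (hr.trans_le (hP x hx)) hr).ne')).continuousWithinAt
  have hvc : ContinuousOn v (closure Ω) := (hC1.continuousOn.neg.div_const _).rexp
  have hwd : ContDiffOn ℝ 1 w Ω := fun x hx =>
    (((N.contDiffAt_polarF_sub (hne x (subset_closure hx))).div_const r).rpow_const_of_ne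
      (div_pos (hr.trans_le (hP x (subset_closure hx))) hr).ne').contDiffWithinAt
  have hvd : ContDiffOn ℝ 1 v Ω := (hu.neg.div_const _).exp
  have hcmp : ∀ x ∈ Ω, w x ≤ v x := by
    refine le_of_weak_pHarmonic N hp1 hΩ (fun h => hx₀ (subset_closure (h ▸ mem_univ x₀)))
      hvd hwd (fun η hη hc hs => ?_) (fun η hη hc hs => ?_) fun ε hε => ?_
    · have hpt : ∀ x ∈ Ω, ⟪N.flux p (-gradient v x), gradient η x⟫ = ((p - 1)⁻¹) ^ (p - 1) *
          (Real.exp (-u x) * ⟪N.flux p (gradient u x), gradient η x⟫) := fun x hx => by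
        rw [flux_exp_neg N hp1 ((hu.contDiffAt (hΩ.mem_nhds hx)).differentiableAt one_ne_zero),
          real_inner_smul_left, mul_assoc]
      rw [setIntegral_congr_fun hΩ.measurableSet hpt, integral_const_mul,
        hsol.integral_exp_mul_inner_eq_zero hp1 hΩ hu hη hc hs, mul_zero]
    · obtain ⟨C, hC⟩ := exists_flux_barrier N hp1 hpn hr x₀
      have hpt : ∀ x ∈ Ω, ⟪N.flux p (-gradient w x), gradient η x⟫ =
          C * ⟪(polarF N (x - x₀) ^ n)⁻¹ • (x - x₀), gradient η x⟫ := fun x hx => by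
        rw [hC x (hne x (subset_closure hx)), real_inner_smul_left]
      rw [setIntegral_congr_fun hΩ.measurableSet hpt, integral_const_mul,
        setIntegral_eq_integral_of_forall_compl_eq_zero, N.integral_inner_radial_eq_zero x₀ hη hc
          fun h => hx₀ (subset_closure (hs h)), mul_zero]
      intro x hx
      have h0 : gradient η x = 0 := by
        by_contra h0
        exact hx (hs (support_gradient_subset η h0))
      rw [h0, inner_zero_right]
    · obtain ⟨R, hR⟩ := eventually_atTop.1
        ((tendsto_rpow_neg_atTop hγ0).eventually (ge_mem_nhds hε))
      obtain ⟨M, hM, hle⟩ := N.exists_norm_le_mul_polarF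
      refine ⟨closure Ω ∩ (fun x => w x - v x) ⁻¹' Ici ε, ?_, ?_, fun x hx => ?_⟩
      · rintro x ⟨hx, hxε⟩
        by_contra hxΩ
        have hfr : x ∈ frontier Ω := by rw [hΩ.frontier_eq]; exact ⟨hx, hxΩ⟩
        have h1 : v x = 1 := by simp [hv, hbc x hfr]
        have h2 : w x ≤ 1 := Real.rpow_le_one_of_one_le_of_nonpos
          ((one_le_div hr).2 (hP x hx)) (by linarith)
        have h3 : ε ≤ w x - v x := hxε
        linarith
      · refine Metric.isCompact_of_isClosed_isBounded
          ((hwc.sub hvc).preimage_isClosed_of_isClosed isClosed_closure isClosed_Ici) ?_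
        refine (Metric.isBounded_closedBall (x := x₀) (r := M * (R * r))).subset ?_
        rintro x ⟨-, hxε⟩
        have h1 : ε ≤ w x - v x := hxε
        have h2 : 0 < v x := Real.exp_pos _
        have h3 : polarF N (x - x₀) / r < R := by
          by_contra hlt
          have h4 : w x ≤ ε := hR _ (not_lt.1 hlt)
          linarith
        rw [div_lt_iff₀ hr] at h3
        rw [mem_closedBall, dist_eq_norm]
        exact (hle _).trans (mul_le_mul_of_nonneg_left h3.le hM.le)
      · exact le_of_not_ge fun h => hx.2 ⟨subset_closure hx.1, h⟩
  intro x hx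
  have hPx := div_pos (hr.trans_le (hP x (subset_closure hx))) hr
  have h := Real.log_le_log (Real.rpow_pos_of_pos hPx (-γ)) (hcmp x hx)
  rw [Real.log_rpow hPx, Real.log_exp, le_div_iff₀ hp', hγ] at h
  have h1 : -((n - p) / (p - 1)) * Real.log (polarF N (x - x₀) / r) * (p - 1) =
      -((n - p) * Real.log (polarF N (x - x₀) / r)) := by field_simp
  linarith
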